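/- arXiv:2005.05047 — 2 statements merged into one kernel-verified Lean document; each statement's English description precedes it below -/
import Mathlib

section
/- The pair (Γ_⊙, τ) is a stable translation quiver: τ is a bijection of the vertex set 𝔈 of Γ_⊙, and for all tagged edges M, N the number of arrows M → N in Γ_⊙ equals the number of arrows τ(N) → M. -/
/-- A candidate tagged edge of the punctured polygon with `N` boundary vertices:
a start `a`, an end `b` (vertices modelled by `ZMod N`) and a tag `ε`. -/
structure TaggedEdge (N : ℕ) where
  a : ZMod N
  b : ZMod N
  ε : ℤ

/-- `|δ_{a,b}|`, the number of vertices on the counterclockwise boundary path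
from `a` to `b` (equal to `((b - a) mod N) + 1` if `a ≠ b`, and `N + 1` if `a = b`). -/
def deltaLen {N : ℕ} (a b : ZMod N) : ℕ :=
  if a = b then N + 1 else (b - a).val + 1

/-- The set `𝔈` of tagged edges of `P_N` (with parameter `n`): triples `M_{a,b}^ε`
with `|δ_{a,b}| ≥ N − n + 3`, `ε ∈ {1, −1}` and `ε = 1` whenever `a ≠ b`. -/
def Edges (n N : ℕ) : Set (TaggedEdge N) :=
  {M | N - n + 3 ≤ deltaLen M.a M.b ∧ (M.ε = 1 ∨ M.ε = -1) ∧ (M.a ≠ M.b → M.ε = 1)}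

/-- The translation `τ` on tagged edges: `τ M_{a,b} = M_{a−1,b−1}` for `a ≠ b`,
and `τ M_{a,a}^ε = M_{a−1,a−1}^{−ε}`. -/
def tr {N : ℕ} (M : TaggedEdge N) : TaggedEdge N :=
  if M.a = M.b then ⟨M.a - 1, M.b - 1, -M.ε⟩ else ⟨M.a - 1, M.b - 1, M.ε⟩

/-- Elementary moves between tagged edges of `P_N` (with parameter `n`). -/
def ElemMove (n N : ℕ) (M M' : TaggedEdge N) : Prop :=
  (deltaLen M.a M.b = N - n + 3 ∧ M' = ⟨M.a, M.b + 1, 1⟩) ∨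
  (N - n + 4 ≤ deltaLen M.a M.b ∧ deltaLen M.a M.b ≤ N - 1 ∧
    (M' = ⟨M.a + 1, M.b, 1⟩ ∨ M' = ⟨M.a, M.b + 1, 1⟩)) ∨
  (deltaLen M.a M.b = N ∧
    (M' = ⟨M.a + 1, M.b, 1⟩ ∨ M' = ⟨M.a, M.a, 1⟩ ∨ M' = ⟨M.a, M.a, -1⟩)) ∨
  (M.a = M.b ∧ M' = ⟨M.a + 1, M.a, 1⟩)

/-!
Between tagged edges, an elementary move is the same thing as advancing one of the two endpoints by
one step: the bounds on `|δ|` and the tags in the four kinds of moves only ensure that the result is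
again a tagged edge. Since `τ` moves both endpoints back by one step, an arrow `M → M'` advancing
one endpoint becomes an arrow `τ M' → M` advancing the other.
-/

attribute [ext] TaggedEdge

theorem zmod_val_sub_one_add_one {N : ℕ} [NeZero N] {x : ZMod N} (hx : x ≠ 0) :
    (x - 1).val + 1 = x.val := by
  have hN : N ≠ 1 := by
    rintro rfl
    exact hx (Subsingleton.elim x 0)
  have hpos : 1 ≤ x.val := ZMod.val_pos.2 hx
  have hone : (1 : ZMod N).val = 1 := ZMod.val_one'' hN
  rw [ZMod.val_sub (hone ▸ hpos), hone, Nat.sub_add_cancel hpos]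

section DeltaLen

variable {N : ℕ} {a b : ZMod N}

theorem deltaLen_self (a : ZMod N) : deltaLen a a = N + 1 := if_pos rfl

theorem deltaLen_of_ne (h : a ≠ b) : deltaLen a b = (b - a).val + 1 := if_neg h

theorem deltaLen_sub_one_sub_one (a b : ZMod N) : deltaLen (a - 1) (b - 1) = deltaLen a b := by
  simp [deltaLen]

variable [NeZero N]

theorem deltaLen_le_of_ne (h : a ≠ b) : deltaLen a b ≤ N :=
  (deltaLen_of_ne h).trans_le (ZMod.val_lt _)

theorem deltaLen_eq_add_one_iff : deltaLen a b = N + 1 ↔ a = b := by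
  refine ⟨fun h => ?_, fun h => h ▸ deltaLen_self a⟩
  by_contra hab
  exact (deltaLen_le_of_ne hab).not_gt (h ▸ N.lt_succ_self)

theorem deltaLen_le_add_one (a b : ZMod N) : deltaLen a b ≤ N + 1 := by
  obtain rfl | h := eq_or_ne a b
  · exact (deltaLen_self a).le
  · exact (deltaLen_le_of_ne h).trans N.le_succ

/-- Unlike the definition, this formula needs no case distinction: for `a = b` the value of `-1`
is `N - 1`. -/
theorem deltaLen_eq_val_add_two (a b : ZMod N) : deltaLen a b = (b - a - 1).val + 2 := by
  obtain rfl | h := eq_or_ne a b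
  · obtain ⟨m, rfl⟩ := Nat.exists_eq_succ_of_ne_zero (NeZero.ne N)
    rw [deltaLen_self, sub_self, zero_sub, ZMod.val_neg_one]
  · rw [deltaLen_of_ne h, ← zmod_val_sub_one_add_one (sub_ne_zero.2 h.symm)]

theorem deltaLen_add_one_self (a : ZMod N) : deltaLen a (a + 1) = 2 := by
  rw [deltaLen_eq_val_add_two, add_sub_cancel_left, sub_self, ZMod.val_zero]

theorem deltaLen_add_one_right (h : a ≠ b) : deltaLen a (b + 1) = deltaLen a b + 1 := by
  rw [deltaLen_eq_val_add_two, deltaLen_of_ne h, add_sub_right_comm, add_sub_cancel_right]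

theorem deltaLen_add_one_left (h : a + 1 ≠ b) : deltaLen (a + 1) b + 1 = deltaLen a b := by
  rw [deltaLen_eq_val_add_two a, deltaLen_of_ne h, sub_sub]

theorem add_one_eq_of_deltaLen_eq (h : deltaLen a b = N) : b + 1 = a := by
  have hab : a ≠ b := fun hab => by
    rw [deltaLen_eq_add_one_iff.2 hab] at h
    exact N.succ_ne_self h
  have hloop : deltaLen a (b + 1) = N + 1 := by rw [deltaLen_add_one_right hab, h]
  exact (deltaLen_eq_add_one_iff.1 hloop).symm

end DeltaLen

section Translation

variable {n N : ℕ}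

theorem tr_a (M : TaggedEdge N) : (tr M).a = M.a - 1 := by
  unfold tr; split_ifs <;> rfl

theorem tr_b (M : TaggedEdge N) : (tr M).b = M.b - 1 := by
  unfold tr; split_ifs <;> rfl

theorem tr_ε (M : TaggedEdge N) : (tr M).ε = if M.a = M.b then -M.ε else M.ε := by
  unfold tr; split_ifs <;> rfl

theorem tr_bijective : Function.Bijective (tr : TaggedEdge N → TaggedEdge N) := by
  refine Function.bijective_iff_has_inverse.2
    ⟨fun M => ⟨M.a + 1, M.b + 1, if M.a = M.b then -M.ε else M.ε⟩, fun M => ?_, fun M => ?_⟩ <;>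
  by_cases h : M.a = M.b <;> ext <;> simp [tr, h]

theorem tr_mem_edges_iff {M : TaggedEdge N} : tr M ∈ Edges n N ↔ M ∈ Edges n N := by
  simp only [Edges, Set.mem_ofPred_eq, tr_a, tr_b, tr_ε, deltaLen_sub_one_sub_one, ne_eq,
    sub_left_inj]
  by_cases h : M.a = M.b
  · have htag : -M.ε = 1 ∨ -M.ε = -1 ↔ M.ε = 1 ∨ M.ε = -1 := by
      rw [neg_inj, neg_eq_iff_eq_neg, or_comm]
    simp only [h, if_true, htag, not_true, false_imp_iff]
  · simp only [h, if_false]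

theorem tr_bijOn_edges (n N : ℕ) : Set.BijOn tr (Edges n N) (Edges n N) :=
  (Equiv.ofBijective tr tr_bijective).bijOn fun _ => tr_mem_edges_iff

end Translation

section Moves

variable {n N : ℕ} {M M' : TaggedEdge N}

/-- `M'` arises from `M` by moving one endpoint a single step counterclockwise; tags are ignored.
This describes the arrows of `Γ_⊙` uniformly in the four kinds of elementary moves. -/
def AdvancesTo (M M' : TaggedEdge N) : Prop :=
  (M'.a = M.a ∧ M'.b = M.b + 1) ∨ (M'.a = M.a + 1 ∧ M'.b = M.b)

theorem tr_advancesTo_iff : AdvancesTo (tr M') M ↔ AdvancesTo M M' := by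
  simp only [AdvancesTo, tr_a, tr_b, sub_add_cancel, eq_sub_iff_add_eq]
  rw [or_comm, eq_comm (a := M.a), eq_comm (b := M'.b), eq_comm (b := M'.a), eq_comm (a := M.b)]

theorem three_le_deltaLen_of_mem_edges (hM : M ∈ Edges n N) : 3 ≤ deltaLen M.a M.b :=
  (Nat.le_add_left 3 (N - n)).trans hM.1

theorem eq_mk_one_of_mem_edges (hM : M ∈ Edges n N) (h : M.a ≠ M.b) : M = ⟨M.a, M.b, 1⟩ :=
  TaggedEdge.ext rfl rfl (hM.2.2 h)

variable [NeZero N]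

theorem add_one_ne_of_mem_edges (hM : M ∈ Edges n N) : M.a + 1 ≠ M.b := fun h => by
  have hlen := three_le_deltaLen_of_mem_edges hM
  rw [← h, deltaLen_add_one_self] at hlen
  omega

theorem ElemMove.advancesTo (h : ElemMove n N M M') : AdvancesTo M M' := by
  rcases h with ⟨-, rfl⟩ | ⟨-, -, rfl | rfl⟩ | ⟨hlen, rfl | hM'⟩ | ⟨hloop, rfl⟩
  · exact .inl ⟨rfl, rfl⟩
  · exact .inr ⟨rfl, rfl⟩
  · exact .inl ⟨rfl, rfl⟩
  · exact .inr ⟨rfl, rfl⟩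
  · have hend : M.b + 1 = M.a := add_one_eq_of_deltaLen_eq hlen
    rcases hM' with rfl | rfl <;> exact .inl ⟨rfl, hend.symm⟩
  · exact .inr ⟨rfl, hloop⟩

theorem elemMove_of_end_advances (hM : M ∈ Edges n N) (hM' : M' ∈ Edges n N)
    (ha : M'.a = M.a) (hb : M'.b = M.b + 1) : ElemMove n N M M' := by
  have hnotLoop : M.a ≠ M.b := fun h => add_one_ne_of_mem_edges hM' (by rw [ha, hb, h])
  obtain hlen | hlen := (deltaLen_le_of_ne hnotLoop).eq_or_lt
  · have hloop' : M'.b = M.a := hb.trans (add_one_eq_of_deltaLen_eq hlen)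
    exact .inr (.inr (.inl ⟨hlen, .inr (hM'.2.1.imp (TaggedEdge.ext ha hloop')
      (TaggedEdge.ext ha hloop'))⟩))
  · have hnotLoop' : M'.a ≠ M'.b := by
      rw [ha, hb, Ne, ← deltaLen_eq_add_one_iff, deltaLen_add_one_right hnotLoop]
      omega
    have hM'_eq : M' = ⟨M.a, M.b + 1, 1⟩ := ha ▸ hb ▸ eq_mk_one_of_mem_edges hM' hnotLoop'
    obtain hmin | hmin := hM.1.eq_or_lt
    · exact .inl ⟨hmin.symm, hM'_eq⟩
    · exact .inr (.inl ⟨hmin, Nat.le_sub_one_of_lt hlen, .inr hM'_eq⟩)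

theorem elemMove_of_start_advances (hM : M ∈ Edges n N) (hM' : M' ∈ Edges n N)
    (ha : M'.a = M.a + 1) (hb : M'.b = M.b) : ElemMove n N M M' := by
  have hne : M.a + 1 ≠ M.b := add_one_ne_of_mem_edges hM
  have hM'_eq : M' = ⟨M.a + 1, M.b, 1⟩ :=
    ha ▸ hb ▸ eq_mk_one_of_mem_edges hM' (ha ▸ hb ▸ hne)
  have hmin : N - n + 4 ≤ deltaLen M.a M.b := by
    rw [← deltaLen_add_one_left hne, ← ha, ← hb]
    exact Nat.succ_le_succ hM'.1
  obtain hlen | hlen | hlen : deltaLen M.a M.b ≤ N - 1 ∨ deltaLen M.a M.b = N ∨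
      deltaLen M.a M.b = N + 1 := by
    have := deltaLen_le_add_one M.a M.b
    omega
  · exact .inr (.inl ⟨hmin, hlen, .inl hM'_eq⟩)
  · exact .inr (.inr (.inl ⟨hlen, .inl hM'_eq⟩))
  · have hloop : M.a = M.b := deltaLen_eq_add_one_iff.1 hlen
    exact .inr (.inr (.inr ⟨hloop, by rw [hM'_eq, hloop]⟩))

theorem elemMove_iff_advancesTo (hM : M ∈ Edges n N) (hM' : M' ∈ Edges n N) :
    ElemMove n N M M' ↔ AdvancesTo M M' :=
  ⟨ElemMove.advancesTo, fun h => h.elim (fun h => elemMove_of_end_advances hM hM' h.1 h.2)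
    fun h => elemMove_of_start_advances hM hM' h.1 h.2⟩

end Moves

theorem gammaOdot_stable_translation_quiver_general (n N : ℕ) (hn : 0 < n) (hN : n ≤ N) :
    Set.BijOn tr (Edges n N) (Edges n N) ∧
      ∀ M ∈ Edges n N, ∀ M' ∈ Edges n N, (ElemMove n N M M' ↔ ElemMove n N (tr M') M) := by
  have : NeZero N := ⟨(hn.trans_le hN).ne'⟩
  refine ⟨tr_bijOn_edges n N, fun M hM M' hM' => ?_⟩
  rw [elemMove_iff_advancesTo hM hM', elemMove_iff_advancesTo (tr_mem_edges_iff.2 hM') hM,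
    tr_advancesTo_iff]

/-- `(Γ_⊙, τ)` is a stable translation quiver: `τ` is a bijection of the vertex set `𝔈`,
and the number of arrows `M → N` (here `0` or `1`, given by the existence of an elementary
move) equals the number of arrows `τ(N) → M`. -/
theorem gammaOdot_stable_translation_quiver (n p : ℕ) (hn : 3 ≤ n) (hp : 1 ≤ p) :
    Set.BijOn tr (Edges n (n * p)) (Edges n (n * p)) ∧
      ∀ M ∈ Edges n (n * p), ∀ N ∈ Edges n (n * p),
        (ElemMove n (n * p) M N ↔ ElemMove n (n * p) (tr N) M) :=
  gammaOdot_stable_translation_quiver_general n (n * p) (by omega) (Nat.le_mul_of_pos_right n hp)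
end

section
/- The map φ_p is an isomorphism of stable translation quivers from (Γ_{n,p}, τ_{n,p}) to (Γ_⊙, τ): it is a bijection from the vertex set of Γ_{n,p} onto the set 𝔈 of tagged edges of P_{np}, there is an arrow (i,j) → (i′,j′) in Γ_{n,p} if and only if there is an arrow φ_p(i,j) → φ_p(i′,j′) in Γ_⊙, and φ_p ∘ τ_{n,p} = τ ∘ φ_p. -/
/-- Vertices of the translation quiver `Γ` with columns indexed by `ZMod N` and
levels `{0, 0̄, 1, …, m−2}`: the level `0` is `Sum.inl false`, the level `0̄` is
`Sum.inl true`, and the level `j ∈ {1, …, m−2}` is `Sum.inr k` with `k = j − 1`. -/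
abbrev GammaV (N m : ℕ) := ZMod N × (Bool ⊕ Fin (m - 2))

/-- The arrows of the quiver `Γ`: `(i,1)→(i,0)`, `(i,1)→(i,0̄)`, `(i,j)→(i,j−1)` for
`2 ≤ j ≤ m−2`, `(i,0)→(i+1,1)`, `(i,0̄)→(i+1,1)`, `(i,j−1)→(i+1,j)` for `2 ≤ j ≤ m−2`. -/
def GammaArrow (N m : ℕ) : GammaV N m → GammaV N m → Prop
  | (i, .inr j), (i', .inl _) => i' = i ∧ (j : ℕ) = 0
  | (i, .inr j), (i', .inr j') =>
      (i' = i ∧ (j' : ℕ) + 1 = (j : ℕ)) ∨ (i' = i + 1 ∧ (j : ℕ) + 1 = (j' : ℕ))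
  | (i, .inl _), (i', .inr j') => i' = i + 1 ∧ (j' : ℕ) = 0
  | (_, .inl _), (_, .inl _) => False

/-- The translation `τ(i,j) = (i−1,j)`, with the `0`/`0̄` switch at `i = 0` when `N` is odd. -/
def GammaTau (N m : ℕ) : GammaV N m → GammaV N m
  | (i, .inl e) => if Odd N ∧ i = 0 then (i - 1, .inl (!e)) else (i - 1, .inl e)
  | (i, .inr j) => (i - 1, .inr j)

/-- The map `φ_p` from the vertices of `Γ_{n,p}` to tagged edges of `P_{np}`:
`φ_p(i,j) = M_{i+1, i+np+1−j}` for `j ∉ {0,0̄}` (here the level `j = k+1` is coded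
by `Sum.inr k`), and `φ_p(i,j) = M_{i+1,i+1}^{±1}` for `j ∈ {0,0̄}`, the tag being `+1`
exactly when (`j = 0` and `i` is even) or (`j = 0̄` and `i` is odd). -/
def phi (n p : ℕ) : GammaV (n * p) n → TaggedEdge (n * p)
  | (i, .inr k) => ⟨i + 1, i + ((n * p + 1 - ((k : ℕ) + 1) : ℕ) : ZMod (n * p)), 1⟩
  | (i, .inl e) => ⟨i + 1, i + 1, if (e = false ↔ Even i.val) then 1 else -1⟩

/-!
Both quivers are described by the same coordinates. Give the tagged edge `M_{a,b}^ε` the column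
`a - 1`, the level `(a - b) mod N` and the tag `ε`. Since `|δ_{a,b}| = N + 1 - level`, the set `𝔈`
consists of all columns and all levels `0, …, n - 2`, with both tags at level `0` and only the
tag `+1` elsewhere. Inside `𝔈` every elementary move either lowers the level by one in the same
column or raises it by one while passing to the next column, and these are exactly the arrows of
`Γ`. On level `0`, passing to the previous column changes the parity of its index, and hence the
tag, except when wrapping around an odd number of columns, where the switch of `0` and `0̄` makes
up for it.
-/

section Residues

variable {N : ℕ}

theorem zmod_val_add_one [NeZero N] (x : ZMod N) :
    (x + 1).val = if x.val + 1 = N then 0 else x.val + 1 := by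
  have hx : x.val < N := x.val_lt
  rw [ZMod.val_add, ZMod.val_one_eq_one_mod, Nat.add_mod_mod]
  split_ifs with h
  · rw [h, Nat.mod_self]
  · exact Nat.mod_eq_of_lt (by omega)

theorem eq_add_one_iff_val_eq {x : ZMod N} (hx : x.val + 1 < N) (y : ZMod N) :
    y = x + 1 ↔ y.val = x.val + 1 := by
  have : NeZero N := ⟨by omega⟩
  rw [← (ZMod.val_injective N).eq_iff, zmod_val_add_one, if_neg hx.ne]

theorem even_val_sub_one_iff_even_val [NeZero N] (i : ZMod N) :
    (Even (i - 1).val ↔ Even i.val) ↔ Odd N ∧ i = 0 := by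
  obtain ⟨j, rfl⟩ : ∃ j, i = j + 1 := ⟨i - 1, (sub_add_cancel i 1).symm⟩
  rw [add_sub_cancel_right, ← ZMod.val_eq_zero (j + 1), zmod_val_add_one]
  split_ifs with h
  · simp only [← h, Even.zero, iff_true, and_true, Nat.odd_add_one, Nat.not_odd_iff_even]
  · simp only [Nat.even_add_one, iff_not_self, and_false]

end Residues

namespace TaggedEdge

variable {n N : ℕ}

/-- The level of `M_{a,b}^ε`: the residue of `a - b`. The loops `M_{a,a}^ε` have level `0`, and
`φ_p` sends `(i, j)` with `j ≠ 0̄` to an edge of level `j`. -/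
def level (M : TaggedEdge N) : ℕ := (M.a - M.b).val

theorem level_eq_zero_iff (M : TaggedEdge N) : M.level = 0 ↔ M.a = M.b := by
  rw [level, ZMod.val_eq_zero, sub_eq_zero]

theorem tr_eq (M : TaggedEdge N) :
    tr M = ⟨M.a - 1, M.b - 1, if M.level = 0 then -M.ε else M.ε⟩ := by
  simp only [tr, level_eq_zero_iff]
  split_ifs <;> rfl

theorem ext_level [NeZero N] {M M' : TaggedEdge N} (ha : M.a = M'.a) (hl : M.level = M'.level)
    (hε : M.ε = M'.ε) : M = M' := by
  obtain ⟨a, b, ε⟩ := M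
  obtain ⟨a', b', ε'⟩ := M'
  obtain rfl : a = a' := ha
  obtain rfl : ε = ε' := hε
  obtain rfl : b = b' := sub_right_injective (ZMod.val_injective N hl)
  rfl

theorem eq_mk_self_iff (M : TaggedEdge N) (a : ZMod N) (ε : ℤ) :
    M = ⟨a, a, ε⟩ ↔ M.a = a ∧ M.level = 0 ∧ M.ε = ε := by
  obtain ⟨a', b', ε'⟩ := M
  rw [mk.injEq, level_eq_zero_iff]
  refine and_congr_right fun ha => and_congr_left fun _ => ?_
  obtain rfl : a' = a := ha
  exact eq_comm

theorem eq_mk_add_one_left_iff {M : TaggedEdge N} (hM : M.level + 1 < N) (M' : TaggedEdge N)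
    (ε : ℤ) : M' = ⟨M.a + 1, M.b, ε⟩ ↔ M'.a = M.a + 1 ∧ M'.level = M.level + 1 ∧ M'.ε = ε := by
  have : NeZero N := ⟨by omega⟩
  have hlevel : (⟨M.a + 1, M.b, ε⟩ : TaggedEdge N).level = M.level + 1 :=
    (eq_add_one_iff_val_eq hM _).1 (add_sub_right_comm _ _ _)
  constructor
  · rintro rfl
    exact ⟨rfl, hlevel, rfl⟩
  · rintro ⟨ha, hl, hε⟩
    exact ext_level ha (hl.trans hlevel.symm) hε

theorem eq_mk_add_one_right_iff {M' : TaggedEdge N} (hM' : M'.level + 1 < N) (M : TaggedEdge N)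
    (ε : ℤ) : M' = ⟨M.a, M.b + 1, ε⟩ ↔ M'.a = M.a ∧ M'.level + 1 = M.level ∧ M'.ε = ε := by
  obtain ⟨a', b', ε'⟩ := M'
  rw [mk.injEq, eq_comm (b := M.level)]
  refine and_congr_right fun ha => and_congr_left fun _ => ?_
  obtain rfl : a' = M.a := ha
  refine Iff.trans ?_ (eq_add_one_iff_val_eq hM' (M.a - M.b))
  constructor <;> intro h <;> linear_combination h

variable [NeZero N]

theorem deltaLen_add_level (M : TaggedEdge N) : deltaLen M.a M.b + M.level = N + 1 := by
  unfold deltaLen level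
  split_ifs with hab
  · rw [hab, sub_self, ZMod.val_zero, add_zero]
  · have hlt : (M.a - M.b).val < N := ZMod.val_lt _
    rw [← neg_sub M.a M.b, ZMod.neg_val, if_neg (sub_ne_zero.2 hab)]
    omega

theorem mem_edges_iff_level (hN : n ≤ N) (M : TaggedEdge N) :
    M ∈ Edges n N ↔ M.level + 2 ≤ n ∧ (M.ε = 1 ∨ M.ε = -1) ∧ (M.level ≠ 0 → M.ε = 1) := by
  have hlen := M.deltaLen_add_level
  have hlevel : N - n + 3 ≤ deltaLen M.a M.b ↔ M.level + 2 ≤ n := by omega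
  rw [Edges, Set.mem_ofPred_eq, hlevel, ne_eq, ne_eq, level_eq_zero_iff]

theorem elemMove_iff_level (hN : n ≤ N) (M M' : TaggedEdge N) :
    ElemMove n N M M' ↔
      (M.level + 2 = n ∧ M' = ⟨M.a, M.b + 1, 1⟩) ∨
      (2 ≤ M.level ∧ M.level + 3 ≤ n ∧
        (M' = ⟨M.a + 1, M.b, 1⟩ ∨ M' = ⟨M.a, M.b + 1, 1⟩)) ∨
      (M.level = 1 ∧
        (M' = ⟨M.a + 1, M.b, 1⟩ ∨ M' = ⟨M.a, M.a, 1⟩ ∨ M' = ⟨M.a, M.a, -1⟩)) ∨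
      (M.level = 0 ∧ M' = ⟨M.a + 1, M.b, 1⟩) := by
  have hlen := M.deltaLen_add_level
  have hpos : 0 < N := NeZero.pos N
  have htop : deltaLen M.a M.b = N - n + 3 ↔ M.level + 2 = n := by omega
  have hmiddle : N - n + 4 ≤ deltaLen M.a M.b ↔ M.level + 3 ≤ n := by omega
  have htwo : deltaLen M.a M.b ≤ N - 1 ↔ 2 ≤ M.level := by omega
  have hone : deltaLen M.a M.b = N ↔ M.level = 1 := by omega
  have hzero : M.a = M.b ∧ M' = ⟨M.a + 1, M.a, 1⟩ ↔ M.level = 0 ∧ M' = ⟨M.a + 1, M.b, 1⟩ := by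
    rw [level_eq_zero_iff]
    exact and_congr_right fun h => by rw [← h]
  rw [ElemMove, htop, hmiddle, htwo, hone, hzero, and_left_comm]

/-- A pitfall for small `n`: if `n = 3`, both (1) and (3) apply at level `1`, and the target
`M_{a+1,b}` of (3) lies outside `𝔈`; if `n = 2`, (1) applies to loops and leads outside `𝔈`. -/
theorem elemMove_iff_of_mem_edges (hN : n ≤ N) {M M' : TaggedEdge N} (hM : M ∈ Edges n N)
    (hM' : M' ∈ Edges n N) :
    ElemMove n N M M' ↔
      (M'.a = M.a ∧ M'.level + 1 = M.level) ∨ (M'.a = M.a + 1 ∧ M'.level = M.level + 1) := by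
  obtain ⟨hl, -, -⟩ := (mem_edges_iff_level hN M).1 hM
  obtain ⟨hl', hε', htag'⟩ := (mem_edges_iff_level hN M').1 hM'
  rw [elemMove_iff_level hN]
  simp only [eq_mk_add_one_left_iff (show M.level + 1 < N by omega),
    eq_mk_add_one_right_iff (show M'.level + 1 < N by omega), eq_mk_self_iff]
  grind

end TaggedEdge

namespace GammaV

variable {N m : ℕ}

/-- The level `j` of a vertex `(i, j)` of `Γ`, where `0` and `0̄` both count as `0`. -/
def level : GammaV N m → ℕ
  | (_, .inl _) => 0
  | (_, .inr k) => k + 1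

/-- The tag that `φ_p` gives to the image of a vertex of `Γ`. -/
def tag : GammaV N m → ℤ
  | (i, .inl e) => if (e = false ↔ Even i.val) then 1 else -1
  | (_, .inr _) => 1

/-- The map `φ_p` with an arbitrary number `N` of columns in place of `np`. The end vertex
`i + np + 1 - j` is written `i + 1 - j`, as `np` vanishes in `ZMod (n * p)`. -/
def toTaggedEdge (x : GammaV N m) : TaggedEdge N :=
  ⟨x.1 + 1, x.1 + 1 - (x.level : ZMod N), x.tag⟩

theorem level_add_two_le (hm : 2 ≤ m) (x : GammaV N m) : x.level + 2 ≤ m := by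
  obtain ⟨_, _ | k⟩ := x
  · exact hm
  · have := k.isLt
    simp only [level]
    omega

theorem tag_eq_one_or (x : GammaV N m) : x.tag = 1 ∨ x.tag = -1 := by
  obtain ⟨i, e | k⟩ := x
  · exact ite_eq_or_eq _ _ _
  · exact Or.inl rfl

theorem tag_eq_one_of_level_ne_zero {x : GammaV N m} (hx : x.level ≠ 0) : x.tag = 1 := by
  obtain ⟨i, e | k⟩ := x
  · exact absurd rfl hx
  · rfl

theorem ext_level_tag {x y : GammaV N m} (hcol : x.1 = y.1) (hlevel : x.level = y.level)
    (htag : x.tag = y.tag) : x = y := by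
  obtain ⟨i, e | k⟩ := x <;> obtain ⟨i', e' | k'⟩ := y <;> obtain rfl : i = i' := hcol
  · by_cases hi : Even i.val <;> cases e <;> cases e' <;> simp_all [tag]
  · exact absurd hlevel.symm (Nat.succ_ne_zero _)
  · exact absurd hlevel (Nat.succ_ne_zero _)
  · rw [Fin.ext (Nat.succ_injective hlevel)]

theorem exists_level_tag (i : ZMod N) {l : ℕ} {ε : ℤ} (hl : l + 2 ≤ m) (hε : ε = 1 ∨ ε = -1)
    (htag : l ≠ 0 → ε = 1) : ∃ x : GammaV N m, x.1 = i ∧ x.level = l ∧ x.tag = ε := by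
  cases l with
  | zero =>
    refine ⟨(i, .inl (decide ¬(ε = 1 ↔ Even i.val))), rfl, rfl, ?_⟩
    by_cases hi : Even i.val <;> obtain rfl | rfl := hε <;> simp [tag, hi]
  | succ k => exact ⟨(i, .inr ⟨k, by omega⟩), rfl, rfl, (htag k.succ_ne_zero).symm⟩

theorem gammaArrow_iff_level (x y : GammaV N m) :
    GammaArrow N m x y ↔
      (y.1 = x.1 ∧ y.level + 1 = x.level) ∨ (y.1 = x.1 + 1 ∧ y.level = x.level + 1) := by
  obtain ⟨i, e | k⟩ := x <;> obtain ⟨i', e' | k'⟩ := y <;> simp only [GammaArrow, level] <;> grind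

theorem gammaTau_fst (x : GammaV N m) : (GammaTau N m x).1 = x.1 - 1 := by
  obtain ⟨i, e | k⟩ := x
  · simp only [GammaTau]
    split_ifs <;> rfl
  · rfl

theorem level_gammaTau (x : GammaV N m) : (GammaTau N m x).level = x.level := by
  obtain ⟨i, e | k⟩ := x
  · simp only [GammaTau]
    split_ifs <;> rfl
  · rfl

theorem tag_gammaTau [NeZero N] (x : GammaV N m) :
    (GammaTau N m x).tag = if x.level = 0 then -x.tag else x.tag := by
  obtain ⟨i, e | k⟩ := x
  · have hparity := even_val_sub_one_iff_even_val i
    simp only [GammaTau, level, if_true]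
    split_ifs with hwrap <;> cases e <;> simp only [tag] <;> grind
  · rfl

theorem level_toTaggedEdge {x : GammaV N m} (hx : x.level < N) :
    x.toTaggedEdge.level = x.level := by
  rw [TaggedEdge.level, toTaggedEdge, sub_sub_cancel, ZMod.val_cast_of_lt hx]

theorem toTaggedEdge_gammaTau {x : GammaV N m} (hx : x.level < N) :
    (GammaTau N m x).toTaggedEdge = tr x.toTaggedEdge := by
  have : NeZero N := ⟨by omega⟩
  rw [TaggedEdge.tr_eq, level_toTaggedEdge hx]
  simp only [toTaggedEdge, gammaTau_fst, level_gammaTau, tag_gammaTau, TaggedEdge.mk.injEq]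
  exact ⟨by ring, by ring, trivial⟩

theorem bijOn_toTaggedEdge (hm : 2 ≤ m) (hN : m ≤ N) :
    Set.BijOn (toTaggedEdge : GammaV N m → TaggedEdge N) Set.univ (Edges m N) := by
  have : NeZero N := ⟨by omega⟩
  have hlevel (x : GammaV N m) : x.toTaggedEdge.level = x.level :=
    level_toTaggedEdge (by have := x.level_add_two_le hm; omega)
  refine ⟨fun x _ => ?_, fun x _ y _ hxy => ?_, fun M hM => ?_⟩
  · rw [TaggedEdge.mem_edges_iff_level hN, hlevel]
    exact ⟨x.level_add_two_le hm, x.tag_eq_one_or, tag_eq_one_of_level_ne_zero⟩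
  · exact ext_level_tag (add_right_cancel (congrArg TaggedEdge.a hxy))
      (by rw [← hlevel, hxy, hlevel]) (congrArg TaggedEdge.ε hxy)
  · obtain ⟨hl, hε, htag⟩ := (TaggedEdge.mem_edges_iff_level hN M).1 hM
    obtain ⟨x, hcol, hxl, hxε⟩ := exists_level_tag (M.a - 1) hl hε htag
    exact ⟨x, Set.mem_univ x, TaggedEdge.ext_level (eq_sub_iff_add_eq.1 hcol)
      ((hlevel x).trans hxl) hxε⟩

end GammaV

theorem phi_eq_toTaggedEdge {n p : ℕ} (hp : 1 ≤ p) : phi n p = GammaV.toTaggedEdge := by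
  funext ⟨i, x⟩
  cases x with
  | inl e => simp only [phi, GammaV.toTaggedEdge, GammaV.level, GammaV.tag, Nat.cast_zero, sub_zero]
  | inr k =>
    have hle : n ≤ n * p := Nat.le_mul_of_pos_right n hp
    have hend : i + ((n * p + 1 - (k + 1) : ℕ) : ZMod (n * p)) =
        i + 1 - ((k + 1 : ℕ) : ZMod (n * p)) := by
      rw [Nat.cast_sub (by omega), Nat.cast_succ (n * p), ZMod.natCast_self, zero_add,
        add_sub_assoc]
    simp only [phi, GammaV.toTaggedEdge, GammaV.level, GammaV.tag, hend]

theorem phi_translation_quiver_iso_general {n N : ℕ} (hn : 2 ≤ n) (hN : n ≤ N) :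
    Set.BijOn (GammaV.toTaggedEdge : GammaV N n → TaggedEdge N) Set.univ (Edges n N) ∧
    (∀ x y : GammaV N n,
      (GammaArrow N n x y ↔ ElemMove n N x.toTaggedEdge y.toTaggedEdge)) ∧
    (∀ x : GammaV N n, (GammaTau N n x).toTaggedEdge = tr x.toTaggedEdge) := by
  have : NeZero N := ⟨by omega⟩
  have hlt (x : GammaV N n) : x.level < N := by have := x.level_add_two_le hn; omega
  have hbij : Set.BijOn (GammaV.toTaggedEdge : GammaV N n → TaggedEdge N) Set.univ (Edges n N) :=
    GammaV.bijOn_toTaggedEdge hn hN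
  refine ⟨hbij, fun x y => ?_, fun x => GammaV.toTaggedEdge_gammaTau (hlt x)⟩
  rw [GammaV.gammaArrow_iff_level, TaggedEdge.elemMove_iff_of_mem_edges hN
    (hbij.mapsTo (Set.mem_univ x)) (hbij.mapsTo (Set.mem_univ y)),
    GammaV.level_toTaggedEdge (hlt x), GammaV.level_toTaggedEdge (hlt y)]
  simp only [GammaV.toTaggedEdge, add_left_inj]

/-- `φ_p` is an isomorphism of stable translation quivers from `(Γ_{n,p}, τ_{n,p})` to
`(Γ_⊙, τ)`: it is a bijection from the vertex set of `Γ_{n,p}` onto `𝔈`, there is an arrow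
`x → y` in `Γ_{n,p}` iff there is an arrow (elementary move) `φ_p(x) → φ_p(y)` in `Γ_⊙`,
and `φ_p ∘ τ_{n,p} = τ ∘ φ_p`. -/
theorem phi_translation_quiver_iso (n p : ℕ) (hn : 3 ≤ n) (hp : 1 ≤ p) :
    Set.BijOn (phi n p) Set.univ (Edges n (n * p)) ∧
    (∀ x y : GammaV (n * p) n,
      (GammaArrow (n * p) n x y ↔ ElemMove n (n * p) (phi n p x) (phi n p y))) ∧
    (∀ x : GammaV (n * p) n, phi n p (GammaTau (n * p) n x) = tr (phi n p x)) := by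
  have hN : n ≤ n * p := Nat.le_mul_of_pos_right n hp
  rw [phi_eq_toTaggedEdge hp]
  exact phi_translation_quiver_iso_general (Nat.le_of_succ_le hn) hN
end
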